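/- Suppose A is a ℤ-graded ℂ-algebra with finite-dimensional graded pieces satisfying A^i = 0 for i < c, and M is a graded A-module with finite-dimensional graded pieces satisfying M^i = 0 for i < b. Then M admits a minimal graded projective resolution ⋯ → P_k → ⋯ → P_1 → P_0 → M → 0 such that for every k ≥ 0, the k-th term satisfies P_k^i = 0 for all i < b + (k+1)c, and every P_k has finite-dimensional graded pieces. -/

import Mathlib

/-- A graded module over the ℤ-graded ℂ-algebra `(A, 𝒜)`. -/
structure GModule (A : Type) [Ring A] [Algebra ℂ A] (𝒜 : ℤ → Submodule ℂ A) where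
  carrier : Type
  [acg : AddCommGroup carrier]
  [modC : Module ℂ carrier]
  [modA : Module A carrier]
  [tower : IsScalarTower ℂ A carrier]
  grading : ℤ → Submodule ℂ carrier
  [gsmul : SetLike.GradedSMul 𝒜 grading]
  [decomp : DirectSum.Decomposition grading]

attribute [instance] GModule.acg GModule.modC GModule.modA GModule.tower
  GModule.gsmul GModule.decomp

variable {A : Type} [Ring A] [Algebra ℂ A] {𝒜 : ℤ → Submodule ℂ A}

/-- A graded `A`-submodule of a graded module. -/
def GModule.IsGradedSub (M : GModule A 𝒜) (N : Submodule A M.carrier) : Prop :=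
  ∀ (i : ℤ) (m : M.carrier), m ∈ N →
    (DirectSum.decompose M.grading m i : M.carrier) ∈ N

/-- The graded radical: the intersection of all maximal proper graded submodules;
the head of `M` is `M` modulo this radical.  A projective resolution is minimal
exactly when the image of each differential (and the kernel of the augmentation)
lies in the graded radical. -/
noncomputable def GModule.gradedRad (M : GModule A 𝒜) : Submodule A M.carrier :=
  sInf {N' : Submodule A M.carrier | M.IsGradedSub N' ∧ N' ≠ ⊤ ∧
    ∀ N'' : Submodule A M.carrier, M.IsGradedSub N'' → N' ≤ N'' → N'' = N' ∨ N'' = ⊤}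

/-
Choosing homogeneous bases of the pieces of `M` presents `M` as a quotient of a locally finite free
graded module `F`. In each degree a chain of graded submodules of `F` stabilises, so Zorn's lemma
gives a minimal graded submodule `N` of `F` mapping onto `M`, and `q : N → M` is essential. A lift
`F → N` of `F → M` along `q` restricts to an endomorphism of `N`, which is surjective because `q` is
essential, hence bijective because `N` is locally finite. So `N` is a direct summand of `F`, and
`q` is a projective cover. The generators of `F` have degrees `≥ b`, so `N` lives in degrees
`≥ b + c`; each further syzygy therefore costs one more `c`.
-/

theorem iSupIndep_of_forall_le_ker {ι R V : Type*} [Semiring R] [AddCommMonoid V]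
    [Module R V] {W : ι → Type*} [∀ i, AddCommMonoid (W i)] [∀ i, Module R (W i)]
    {G : ι → Submodule R V} (π : ∀ i, V →ₗ[R] W i)
    (hdisj : ∀ i, Disjoint (G i) (LinearMap.ker (π i)))
    (hker : ∀ i j, j ≠ i → G j ≤ LinearMap.ker (π i)) : iSupIndep G :=
  fun i => (hdisj i).mono_right (iSup₂_le (hker i))

namespace GModule

section Projections

/-- The projection of a graded module onto its piece of degree `i`, as an endomorphism of the
whole module. -/
noncomputable def proj (M : GModule A 𝒜) (i : ℤ) : M.carrier →ₗ[ℂ] M.carrier :=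
  (M.grading i).subtype ∘ₗ DirectSum.component ℂ ℤ (fun i => M.grading i) i ∘ₗ
    (DirectSum.decomposeLinearEquiv M.grading).toLinearMap

variable {M : GModule A 𝒜} {i j : ℤ}

theorem proj_mem (M : GModule A 𝒜) (i : ℤ) (x : M.carrier) : M.proj i x ∈ M.grading i :=
  (DirectSum.decompose M.grading x i).2

theorem proj_of_mem {x : M.carrier} (hx : x ∈ M.grading i) : M.proj i x = x :=
  DirectSum.decompose_of_mem_same _ hx

theorem proj_of_mem_ne {x : M.carrier} (hx : x ∈ M.grading i) (hij : i ≠ j) : M.proj j x = 0 :=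
  DirectSum.decompose_of_mem_ne _ hx hij

@[elab_as_elim]
theorem homogeneous_induction {p : M.carrier → Prop} (zero : p 0)
    (homogeneous : ∀ i, ∀ x ∈ M.grading i, p x) (add : ∀ x y, p x → p y → p (x + y))
    (x : M.carrier) : p x :=
  DirectSum.Decomposition.inductionOn M.grading zero (fun x => homogeneous _ x x.2) add x

theorem mem_of_forall_proj_mem {S : Type*} [SetLike S M.carrier] [AddSubmonoidClass S M.carrier]
    {s : S} {x : M.carrier} (h : ∀ i, M.proj i x ∈ s) : x ∈ s := by
  classical
  rw [← DirectSum.sum_support_decompose M.grading x]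
  exact sum_mem fun i _ => h i

theorem eq_zero_of_forall_proj_eq_zero {x : M.carrier} (h : ∀ i, M.proj i x = 0) : x = 0 :=
  (Submodule.mem_bot A).1 (mem_of_forall_proj_mem fun i => (Submodule.mem_bot A).2 (h i))

theorem proj_add_smul (M : GModule A 𝒜) {a : A} (ha : a ∈ 𝒜 i) (j : ℤ) (x : M.carrier) :
    M.proj (i + j) (a • x) = a • M.proj j x := by
  induction x using homogeneous_induction with
  | zero => simp only [smul_zero, map_zero]
  | homogeneous k x hx =>
    have hax : a • x ∈ M.grading (i + k) := SetLike.GradedSMul.smul_mem ha hx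
    rcases eq_or_ne k j with rfl | hkj
    · rw [proj_of_mem hax, proj_of_mem hx]
    · rw [proj_of_mem_ne hax (by simpa using hkj), proj_of_mem_ne hx hkj, smul_zero]
  | add x y hx hy => rw [smul_add, map_add, map_add, smul_add, hx, hy]

end Projections

section DegreeZero

/-- Homomorphisms of graded modules: the `A`-linear maps which preserve degrees. -/
def IsDegreeZero {M N : GModule A 𝒜} (f : M.carrier →ₗ[A] N.carrier) : Prop :=
  ∀ i, ∀ x ∈ M.grading i, f x ∈ N.grading i

variable {L M N : GModule A 𝒜}

theorem IsDegreeZero.comp {g : M.carrier →ₗ[A] N.carrier} {f : L.carrier →ₗ[A] M.carrier}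
    (hg : IsDegreeZero g) (hf : IsDegreeZero f) : IsDegreeZero (g ∘ₗ f) :=
  fun i x hx => hg i _ (hf i x hx)

theorem IsDegreeZero.proj_apply {f : M.carrier →ₗ[A] N.carrier} (hf : IsDegreeZero f) (i : ℤ)
    (x : M.carrier) : N.proj i (f x) = f (M.proj i x) := by
  induction x using homogeneous_induction with
  | zero => simp only [map_zero]
  | homogeneous j x hx =>
    rcases eq_or_ne j i with rfl | hji
    · rw [proj_of_mem hx, proj_of_mem (hf j x hx)]
    · rw [proj_of_mem_ne hx hji, proj_of_mem_ne (hf j x hx) hji, map_zero]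
  | add x y hx hy => simp only [map_add, hx, hy]

/-- The degree-zero component of an `A`-linear map `h` between graded modules: it sends `x` of
degree `i` to the component of degree `i` of `h x`. -/
noncomputable def degreeZeroPart [GradedAlgebra 𝒜] (h : M.carrier →ₗ[A] N.carrier) :
    M.carrier →ₗ[A] N.carrier :=
  let φ : M.carrier →ₗ[ℂ] N.carrier :=
    DirectSum.toModule ℂ ℤ N.carrier
        (fun i => N.proj i ∘ₗ h.restrictScalars ℂ ∘ₗ (M.grading i).subtype) ∘ₗ
      (DirectSum.decomposeLinearEquiv M.grading).toLinearMap
  have φ_apply {i : ℤ} {x : M.carrier} (hx : x ∈ M.grading i) : φ x = N.proj i (h x) := by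
    lift x to M.grading i using hx
    simp [φ]
  { φ with
    map_smul' := fun a x => by
      change φ (a • x) = a • φ x
      induction a using DirectSum.Decomposition.inductionOn 𝒜 with
      | zero => simp only [zero_smul, map_zero]
      | add a b ha hb => rw [add_smul, map_add, ha, hb, add_smul]
      | @homogeneous i a =>
        induction x using homogeneous_induction with
        | zero => simp only [smul_zero, map_zero]
        | add x y hx hy => rw [smul_add, map_add, hx, hy, map_add, smul_add]
        | homogeneous j x hx =>
          rw [φ_apply (SetLike.GradedSMul.smul_mem a.2 hx), φ_apply hx, map_smul, vadd_eq_add,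
            proj_add_smul _ a.2] }

theorem degreeZeroPart_apply_of_mem [GradedAlgebra 𝒜] (h : M.carrier →ₗ[A] N.carrier) {i : ℤ}
    {x : M.carrier} (hx : x ∈ M.grading i) : degreeZeroPart h x = N.proj i (h x) := by
  lift x to M.grading i using hx
  simp [degreeZeroPart]

theorem isDegreeZero_degreeZeroPart [GradedAlgebra 𝒜] (h : M.carrier →ₗ[A] N.carrier) :
    IsDegreeZero (degreeZeroPart h) := fun i x hx => by
  rw [degreeZeroPart_apply_of_mem h hx]
  exact N.proj_mem i _

theorem exists_isDegreeZero_lift [GradedAlgebra 𝒜] {P : GModule A 𝒜}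
    [Module.Projective A P.carrier] {q : N.carrier →ₗ[A] M.carrier} (hq : IsDegreeZero q)
    (hsurj : Function.Surjective q) {g : P.carrier →ₗ[A] M.carrier} (hg : IsDegreeZero g) :
    ∃ f : P.carrier →ₗ[A] N.carrier, IsDegreeZero f ∧ q ∘ₗ f = g := by
  obtain ⟨h, rfl⟩ := Module.projective_lifting_property q g hsurj
  refine ⟨degreeZeroPart h, isDegreeZero_degreeZeroPart h, LinearMap.ext fun x => ?_⟩
  induction x using homogeneous_induction with
  | zero => simp only [map_zero]
  | homogeneous i x hx =>
    calc q (degreeZeroPart h x) = q (N.proj i (h x)) := by rw [degreeZeroPart_apply_of_mem h hx]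
      _ = M.proj i (q (h x)) := (hq.proj_apply i (h x)).symm
      _ = q (h x) := proj_of_mem (hg i x hx)
  | add x y hx hy => rw [map_add, map_add, hx, hy]

end DegreeZero

section GradedSubmodules

variable {M N : GModule A 𝒜} {S : Submodule A M.carrier} {f : M.carrier →ₗ[A] N.carrier}

theorem isGradedSub_top : M.IsGradedSub ⊤ := fun _ _ _ => Submodule.mem_top

theorem IsGradedSub.sInf {C : Set (Submodule A M.carrier)} (hC : ∀ S ∈ C, M.IsGradedSub S) :
    M.IsGradedSub (sInf C) := fun i x hx =>
  Submodule.mem_sInf.2 fun S hS => hC S hS i x (Submodule.mem_sInf.1 hx S hS)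

theorem IsGradedSub.sup {T : Submodule A M.carrier} (hS : M.IsGradedSub S)
    (hT : M.IsGradedSub T) : M.IsGradedSub (S ⊔ T) := by
  intro i m hm
  obtain ⟨x, hx, y, hy, rfl⟩ := Submodule.mem_sup.1 hm
  rw [DirectSum.decompose_add]
  exact Submodule.add_mem_sup (hS i x hx) (hT i y hy)

theorem IsDegreeZero.isGradedSub_map (hf : IsDegreeZero f) (hS : M.IsGradedSub S) :
    N.IsGradedSub (S.map f) := by
  rintro i _ ⟨x, hx, rfl⟩
  exact ⟨M.proj i x, hS i x hx, (hf.proj_apply i x).symm⟩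

theorem IsDegreeZero.isGradedSub_range (hf : IsDegreeZero f) :
    N.IsGradedSub (LinearMap.range f) := by
  rw [LinearMap.range_eq_map]
  exact hf.isGradedSub_map isGradedSub_top

theorem IsDegreeZero.isGradedSub_ker (hf : IsDegreeZero f) :
    M.IsGradedSub (LinearMap.ker f) := fun i x hx => by
  rw [LinearMap.mem_ker] at hx ⊢
  exact (hf.proj_apply i x).symm.trans (by rw [hx, map_zero])

theorem isInternal_comap_subtype (hS : M.IsGradedSub S) :
    DirectSum.IsInternal fun i => (M.grading i).comap (S.subtype.restrictScalars ℂ) := by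
  refine DirectSum.isInternal_submodule_of_iSupIndep_of_iSup_eq_top
    (iSupIndep_of_forall_le_ker (fun i => M.proj i ∘ₗ S.subtype.restrictScalars ℂ) ?_ ?_) ?_
  · refine fun i => Submodule.disjoint_def.2 fun x hx hx0 => Subtype.ext ?_
    exact (proj_of_mem hx).symm.trans hx0
  · exact fun i j hji x hx => proj_of_mem_ne hx hji
  · classical
    refine eq_top_iff.2 fun x _ => ?_
    have hsum : x = ∑ i ∈ (DirectSum.decompose M.grading x.1).support,
        (⟨M.proj i x, hS i x x.2⟩ : S) := by
      refine Subtype.ext ?_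
      rw [AddSubmonoidClass.coe_finsetSum]
      exact (DirectSum.sum_support_decompose M.grading x.1).symm
    rw [hsum]
    exact sum_mem fun i _ => Submodule.mem_iSup_of_mem i (M.proj_mem i x)

/-- A graded submodule, regarded as a graded module with the induced grading. -/
noncomputable def IsGradedSub.toGModule (hS : M.IsGradedSub S) : GModule A 𝒜 where
  carrier := S
  grading i := (M.grading i).comap (S.subtype.restrictScalars ℂ)
  gsmul := ⟨fun {_ _ _ _} ha hx => SetLike.GradedSMul.smul_mem (A := 𝒜) (B := M.grading) ha hx⟩
  decomp := (isInternal_comap_subtype hS).chooseDecomposition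

/-- The inclusion of a graded submodule. -/
noncomputable def IsGradedSub.incl (hS : M.IsGradedSub S) :
    hS.toGModule.carrier →ₗ[A] M.carrier := S.subtype

theorem IsGradedSub.incl_injective (hS : M.IsGradedSub S) : Function.Injective hS.incl :=
  Subtype.val_injective

theorem IsGradedSub.range_incl (hS : M.IsGradedSub S) : LinearMap.range hS.incl = S :=
  S.range_subtype

theorem IsGradedSub.isDegreeZero_incl (hS : M.IsGradedSub S) : IsDegreeZero hS.incl :=
  fun _ _ hx => hx

end GradedSubmodules

section Finiteness

/-- `M` is concentrated in degrees `≥ b`. -/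
def VanishesBelow (M : GModule A 𝒜) (b : ℤ) : Prop := ∀ i < b, M.grading i = ⊥

/-- All graded pieces of `M` are finite-dimensional. -/
def IsLocallyFinite (M : GModule A 𝒜) : Prop := ∀ i, FiniteDimensional ℂ (M.grading i)

variable {M N : GModule A 𝒜} {f : N.carrier →ₗ[A] M.carrier}

theorem VanishesBelow.of_injective {b : ℤ} (hM : M.VanishesBelow b) (hf : IsDegreeZero f)
    (hinj : Function.Injective f) : N.VanishesBelow b := by
  refine fun i hi => (Submodule.eq_bot_iff _).2 fun x hx => hinj ?_
  rw [map_zero, ← Submodule.mem_bot ℂ, ← hM i hi]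
  exact hf i x hx

theorem IsLocallyFinite.of_injective (hM : M.IsLocallyFinite) (hf : IsDegreeZero f)
    (hinj : Function.Injective f) : N.IsLocallyFinite := fun i =>
  have := hM i
  FiniteDimensional.of_injective ((f.restrictScalars ℂ).restrict (hf i))
    fun _ _ hxy => Subtype.ext (hinj (congrArg Subtype.val hxy))

theorem IsLocallyFinite.injective_of_surjective (hM : M.IsLocallyFinite)
    {f : M.carrier →ₗ[A] M.carrier} (hf : IsDegreeZero f) (hsurj : Function.Surjective f) :
    Function.Injective f := by
  refine (injective_iff_map_eq_zero f).2 fun x hx => eq_zero_of_forall_proj_eq_zero fun i => ?_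
  have := hM i
  let fi : M.grading i →ₗ[ℂ] M.grading i := (f.restrictScalars ℂ).restrict (hf i)
  have hfi : Function.Surjective fi := fun ⟨y, hy⟩ => by
    obtain ⟨z, rfl⟩ := hsurj y
    refine ⟨⟨M.proj i z, M.proj_mem i z⟩, Subtype.ext ?_⟩
    exact (hf.proj_apply i z).symm.trans (proj_of_mem hy)
  have hfx : fi ⟨M.proj i x, M.proj_mem i x⟩ = fi 0 := Subtype.ext <| by
    change f (M.proj i x) = f 0
    rw [← hf.proj_apply, hx, map_zero, map_zero]
  exact congrArg Subtype.val (LinearMap.injective_iff_surjective.2 hfi hfx)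

theorem IsLocallyFinite.exists_forall_inf_le_of_isChain (hM : M.IsLocallyFinite)
    {C : Set (Submodule A M.carrier)} (hC : IsChain (· ≤ ·) C) (hne : C.Nonempty) (i : ℤ) :
    ∃ S ∈ C, ∀ T ∈ C, S.restrictScalars ℂ ⊓ M.grading i ≤ T.restrictScalars ℂ := by
  have := hM i
  let piece (S : Submodule A M.carrier) : Submodule ℂ (M.grading i) :=
    (S.restrictScalars ℂ).comap (M.grading i).subtype
  obtain ⟨S, hS, hmin⟩ := exists_minimalFor_of_wellFoundedLT (· ∈ C) piece hne
  refine ⟨S, hS, fun T hT x hx => ?_⟩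
  have hST : piece S ≤ piece T := (hC.total hS hT).elim
    (fun h => Submodule.comap_mono h) (fun h => hmin hT (Submodule.comap_mono h))
  exact hST (show (⟨x, hx.2⟩ : M.grading i) ∈ piece S from hx.1)

end Finiteness

section EssentialEpimorphisms

/-- Essential epimorphisms of graded modules: no proper graded submodule of the source maps onto
the target. -/
structure IsEssentialEpi {N M : GModule A 𝒜} (q : N.carrier →ₗ[A] M.carrier) : Prop where
  isDegreeZero : IsDegreeZero q
  surjective : Function.Surjective q
  eq_top_of_map_eq_top : ∀ S : Submodule A N.carrier, N.IsGradedSub S → S.map q = ⊤ → S = ⊤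

/-- Projective covers of graded modules. -/
structure IsProjectiveCover {P M : GModule A 𝒜} (ε : P.carrier →ₗ[A] M.carrier) : Prop
    extends IsEssentialEpi ε where
  projective : Module.Projective A P.carrier

variable {L M N P : GModule A 𝒜}

theorem IsEssentialEpi.ker_le_gradedRad {q : N.carrier →ₗ[A] M.carrier} (hq : IsEssentialEpi q) :
    LinearMap.ker q ≤ N.gradedRad := by
  refine le_sInf fun S ⟨hS, hS_ne, hS_max⟩ => ?_
  rcases hS_max _ (hS.sup hq.isDegreeZero.isGradedSub_ker) le_sup_left with h | h
  · exact sup_eq_left.1 h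
  · have hmap : S.map q = ⊤ :=
      (LinearMap.map_eq_top_iff (LinearMap.range_eq_top.2 hq.surjective)).2 h
    exact absurd (hq.eq_top_of_map_eq_top S hS hmap) hS_ne

theorem IsEssentialEpi.surjective_of_comp {q : N.carrier →ₗ[A] M.carrier} (hq : IsEssentialEpi q)
    {f : L.carrier →ₗ[A] N.carrier} (hf : IsDegreeZero f) (h : Function.Surjective (q ∘ₗ f)) :
    Function.Surjective f := by
  refine LinearMap.range_eq_top.1 (hq.eq_top_of_map_eq_top _ hf.isGradedSub_range ?_)
  rw [← LinearMap.range_comp, LinearMap.range_eq_top.2 h]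

theorem map_sInf_eq_top_of_isChain (hP : P.IsLocallyFinite) {g : P.carrier →ₗ[A] M.carrier}
    (hg : IsDegreeZero g) {C : Set (Submodule A P.carrier)} (hC : IsChain (· ≤ ·) C)
    (hne : C.Nonempty) (hgr : ∀ S ∈ C, P.IsGradedSub S) (htop : ∀ S ∈ C, S.map g = ⊤) :
    (sInf C).map g = ⊤ := by
  refine eq_top_iff.2 fun m _ => mem_of_forall_proj_mem fun i => ?_
  obtain ⟨S, hS, hSi⟩ := hP.exists_forall_inf_le_of_isChain hC hne i
  obtain ⟨x, hx, rfl⟩ : m ∈ S.map g := htop S hS ▸ Submodule.mem_top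
  rw [hg.proj_apply]
  exact Submodule.mem_map_of_mem (Submodule.mem_sInf.2 fun T hT =>
    hSi T hT ⟨hgr S hS i x hx, P.proj_mem i x⟩)

theorem exists_minimal_isGradedSub_map_eq_top (hP : P.IsLocallyFinite)
    {g : P.carrier →ₗ[A] M.carrier} (hg : IsDegreeZero g) (hsurj : Function.Surjective g) :
    ∃ S : Submodule A P.carrier, Minimal (fun S => P.IsGradedSub S ∧ S.map g = ⊤) S := by
  have htop : P.IsGradedSub ⊤ ∧ (⊤ : Submodule A P.carrier).map g = ⊤ :=
    ⟨isGradedSub_top, by rw [Submodule.map_top, LinearMap.range_eq_top.2 hsurj]⟩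
  obtain ⟨S, -, hS⟩ := zorn_le_nonempty₀ (α := (Submodule A P.carrier)ᵒᵈ)
    {S : Submodule A P.carrier | P.IsGradedSub S ∧ S.map g = ⊤}
    (fun C hCS hC S hS => ⟨sInf (α := Submodule A P.carrier) C,
      ⟨IsGradedSub.sInf fun S hS => (hCS hS).1,
        map_sInf_eq_top_of_isChain hP hg hC.symm ⟨S, hS⟩ (fun S hS => (hCS hS).1)
          fun S hS => (hCS hS).2⟩,
      fun T hT => sInf_le (α := Submodule A P.carrier) hT⟩)
    (⊤ : Submodule A P.carrier) htop
  exact ⟨S, hS⟩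

theorem exists_isEssentialEpi_comp_incl (hP : P.IsLocallyFinite) {g : P.carrier →ₗ[A] M.carrier}
    (hg : IsDegreeZero g) (hsurj : Function.Surjective g) :
    ∃ (S : Submodule A P.carrier) (hS : P.IsGradedSub S), IsEssentialEpi (g ∘ₗ hS.incl) := by
  obtain ⟨S, ⟨hS, hS_top⟩, hS_min⟩ := exists_minimal_isGradedSub_map_eq_top hP hg hsurj
  refine ⟨S, hS, hg.comp hS.isDegreeZero_incl, ?_, fun T hT hT_top => ?_⟩
  · rw [← LinearMap.range_eq_top, LinearMap.range_comp, hS.range_incl, hS_top]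
  · have hST : S ≤ T.map hS.incl := hS_min
      ⟨hS.isDegreeZero_incl.isGradedSub_map hT, by rwa [← Submodule.map_comp]⟩
      (LinearMap.map_le_range.trans hS.range_incl.le)
    refine eq_top_iff.2 ((Submodule.map_le_map_iff_of_injective hS.incl_injective _ _).1 ?_)
    rwa [Submodule.map_top, hS.range_incl]

theorem IsEssentialEpi.projective_of_comp_eq [GradedAlgebra 𝒜] [Module.Projective A P.carrier]
    {q : N.carrier →ₗ[A] M.carrier} (hq : IsEssentialEpi q) (hN : N.IsLocallyFinite)
    {g : P.carrier →ₗ[A] M.carrier} (hg : IsDegreeZero g) {i : N.carrier →ₗ[A] P.carrier}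
    (hi : IsDegreeZero i) (hgi : g ∘ₗ i = q) : Module.Projective A N.carrier := by
  obtain ⟨f, hf, hqf⟩ := exists_isDegreeZero_lift hq.isDegreeZero hq.surjective hg
  have hsurj : Function.Surjective (f ∘ₗ i) := hq.surjective_of_comp (hf.comp hi) <| by
    rw [← LinearMap.comp_assoc, hqf, hgi]
    exact hq.surjective
  let e : N.carrier ≃ₗ[A] N.carrier := LinearEquiv.ofBijective (f ∘ₗ i)
    ⟨hN.injective_of_surjective (hf.comp hi) hsurj, hsurj⟩
  exact .of_split (i ∘ₗ e.symm.toLinearMap) f (LinearMap.ext e.apply_symm_apply)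

theorem exists_isProjectiveCover_comp_incl [GradedAlgebra 𝒜] [Module.Projective A P.carrier]
    (hP : P.IsLocallyFinite) {g : P.carrier →ₗ[A] M.carrier} (hg : IsDegreeZero g)
    (hsurj : Function.Surjective g) :
    ∃ (S : Submodule A P.carrier) (hS : P.IsGradedSub S), IsProjectiveCover (g ∘ₗ hS.incl) := by
  obtain ⟨S, hS, hq⟩ := exists_isEssentialEpi_comp_incl hP hg hsurj
  have hS_fin : hS.toGModule.IsLocallyFinite :=
    hP.of_injective hS.isDegreeZero_incl hS.incl_injective
  exact ⟨S, hS, hq, hq.projective_of_comp_eq hS_fin hg hS.isDegreeZero_incl rfl⟩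

end EssentialEpimorphisms

section Free

variable {ι : Type} {δ : ι → ℤ} {i : ℤ}

/-- The grading of the free module on homogeneous generators of degrees `δ j`: the coefficient of
the `j`-th generator in an element of degree `i` has degree `i - δ j`. -/
noncomputable def freeGrading (𝒜 : ℤ → Submodule ℂ A) (δ : ι → ℤ) (i : ℤ) :
    Submodule ℂ (ι →₀ A) :=
  ⨅ j, (𝒜 (i - δ j)).comap (Finsupp.lapply j)

theorem mem_freeGrading {f : ι →₀ A} : f ∈ freeGrading 𝒜 δ i ↔ ∀ j, f j ∈ 𝒜 (i - δ j) := by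
  simp only [freeGrading, Submodule.mem_iInf, Submodule.mem_comap, Finsupp.lapply_apply]

theorem single_mem_freeGrading {j : ι} {a : A} (ha : a ∈ 𝒜 i) :
    Finsupp.single j a ∈ freeGrading 𝒜 δ (i + δ j) := by
  classical
  refine mem_freeGrading.2 fun k => ?_
  rcases eq_or_ne j k with rfl | hjk
  · rwa [Finsupp.single_eq_same, add_sub_cancel_right]
  · rw [Finsupp.single_eq_of_ne' hjk]
    exact zero_mem _

variable [GradedAlgebra 𝒜]

theorem isInternal_freeGrading (δ : ι → ℤ) : DirectSum.IsInternal (freeGrading 𝒜 δ) := by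
  refine DirectSum.isInternal_submodule_of_iSupIndep_of_iSup_eq_top
    (iSupIndep_of_forall_le_ker
      (fun i => LinearMap.pi fun j => GradedAlgebra.proj 𝒜 (i - δ j) ∘ₗ Finsupp.lapply j) ?_ ?_) ?_
  · refine fun i => Submodule.disjoint_def.2 fun f hf hf0 => Finsupp.ext fun j => ?_
    exact (DirectSum.decompose_of_mem_same 𝒜 (mem_freeGrading.1 hf j)).symm.trans (congrFun hf0 j)
  · refine fun i k hki f hf => funext fun j => ?_
    exact DirectSum.decompose_of_mem_ne 𝒜 (mem_freeGrading.1 hf j) (by simpa using hki)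
  · refine Submodule.eq_top_iff'.2 fun f => ?_
    induction f using Finsupp.induction_linear with
    | zero => exact zero_mem _
    | add f g hf hg => exact add_mem hf hg
    | single j a =>
      induction a using DirectSum.Decomposition.inductionOn 𝒜 with
      | zero => simp only [Finsupp.single_zero, zero_mem]
      | homogeneous a => exact Submodule.mem_iSup_of_mem _ (single_mem_freeGrading a.2)
      | add a b ha hb => simpa only [Finsupp.single_add] using add_mem ha hb

/-- The free graded module on homogeneous generators of degrees `δ j`. -/
noncomputable def free (𝒜 : ℤ → Submodule ℂ A) [GradedAlgebra 𝒜] (δ : ι → ℤ) : GModule A 𝒜 where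
  carrier := ι →₀ A
  grading := freeGrading 𝒜 δ
  gsmul := ⟨fun {_ _ _ _} ha hf => mem_freeGrading.2 fun j => by
    rw [vadd_eq_add, add_sub_assoc]
    exact SetLike.mul_mem_graded ha (mem_freeGrading.1 hf j)⟩
  decomp := (isInternal_freeGrading δ).chooseDecomposition

instance projective_free (δ : ι → ℤ) : Module.Projective A (free 𝒜 δ).carrier :=
  inferInstanceAs (Module.Projective A (ι →₀ A))

theorem vanishesBelow_free {b c : ℤ} (hA : ∀ i < c, 𝒜 i = ⊥) (hδ : ∀ j, b ≤ δ j) :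
    (free 𝒜 δ).VanishesBelow (b + c) := by
  refine fun i hi => (Submodule.eq_bot_iff _).2 fun f hf => Finsupp.ext fun j => ?_
  have hij : i - δ j < c := by linarith [hδ j]
  exact (Submodule.mem_bot ℂ).1 (hA _ hij ▸ mem_freeGrading.1 hf j)

theorem isLocallyFinite_free {c : ℤ} (hA : ∀ i < c, 𝒜 i = ⊥)
    (hAfin : ∀ i, FiniteDimensional ℂ (𝒜 i)) (hδ : ∀ n, {j | δ j ≤ n}.Finite) :
    (free 𝒜 δ).IsLocallyFinite := by
  intro i
  let J : Set ι := {j | δ j ≤ i - c}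
  have : Finite J := hδ (i - c)
  let coeff : freeGrading 𝒜 δ i →ₗ[ℂ] ∀ j : J, 𝒜 (i - δ j) := LinearMap.pi fun j =>
    (Finsupp.lapply (R := ℂ) j.1).restrict fun _ hf => mem_freeGrading.1 hf j
  refine FiniteDimensional.of_injective coeff (LinearMap.ker_eq_bot.1 ?_)
  refine LinearMap.ker_eq_bot'.2 fun f hf => Subtype.ext (Finsupp.ext fun j => ?_)
  by_cases hj : δ j ≤ i - c
  · exact congrArg Subtype.val (congrFun hf ⟨j, hj⟩)
  · have hij : i - δ j < c := by linarith
    exact (Submodule.mem_bot ℂ).1 (hA _ hij ▸ mem_freeGrading.1 f.2 j)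

variable {M : GModule A 𝒜}

/-- The homomorphism out of a free graded module which sends the `j`-th generator to `v j`. -/
noncomputable def freeLift (δ : ι → ℤ) (v : ι → M.carrier) :
    (free 𝒜 δ).carrier →ₗ[A] M.carrier :=
  Finsupp.linearCombination A v

theorem isDegreeZero_freeLift {v : ι → M.carrier} (hv : ∀ j, v j ∈ M.grading (δ j)) :
    IsDegreeZero (freeLift δ v) := fun i f hf => by
  refine sum_mem fun j _ => ?_
  have hj := SetLike.GradedSMul.smul_mem (B := M.grading) (mem_freeGrading.1 hf j) (hv j)
  rwa [vadd_eq_add, sub_add_cancel] at hj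

theorem freeLift_surjective (δ : ι → ℤ) {v : ι → M.carrier}
    (hv : Submodule.span A (Set.range v) = ⊤) : Function.Surjective (freeLift δ v) :=
  LinearMap.range_eq_top.1 ((Finsupp.range_linearCombination A).trans hv)

end Free

section Covers

variable {M : GModule A 𝒜} {b : ℤ}

theorem exists_homogeneous_generators (hM : M.IsLocallyFinite) (hb : M.VanishesBelow b) :
    ∃ (ι : Type) (δ : ι → ℤ) (v : ι → M.carrier), (∀ j, v j ∈ M.grading (δ j)) ∧
      Submodule.span A (Set.range v) = ⊤ ∧ (∀ j, b ≤ δ j) ∧ ∀ n, {j | δ j ≤ n}.Finite := by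
  let ι : Type := Σ i : ℤ, Fin (Module.finrank ℂ (M.grading i))
  let basis (i : ℤ) := have := hM i; Module.finBasis ℂ (M.grading i)
  let v (j : ι) : M.carrier := basis j.1 j.2
  have hδ : ∀ j : ι, b ≤ j.1 := by
    rintro ⟨i, k⟩
    by_contra! hi
    rw [hb i hi, finrank_bot] at k
    exact k.elim0
  refine ⟨ι, Sigma.fst, v, fun j => (basis j.1 j.2).2, ?_, hδ, fun n => ?_⟩
  · refine eq_top_iff.2 fun m _ => mem_of_forall_proj_mem fun i => ?_
    have hm := congrArg Subtype.val ((basis i).sum_repr ⟨M.proj i m, M.proj_mem i m⟩)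
    simp only [AddSubmonoidClass.coe_finsetSum, Submodule.coe_smul] at hm
    rw [← hm]
    exact sum_mem fun k _ => Submodule.smul_of_tower_mem _ _ (Submodule.subset_span ⟨⟨i, k⟩, rfl⟩)
  · refine ((Set.finite_Icc b n).biUnion fun i _ => Set.finite_range (Sigma.mk i)).subset ?_
    exact fun j hj => Set.mem_biUnion ⟨hδ j, hj⟩ ⟨j.2, rfl⟩

theorem exists_isProjectiveCover [GradedAlgebra 𝒜] {c : ℤ} (hA : ∀ i < c, 𝒜 i = ⊥)
    (hAfin : ∀ i, FiniteDimensional ℂ (𝒜 i)) (hb : M.VanishesBelow b) (hM : M.IsLocallyFinite) :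
    ∃ (P : GModule A 𝒜) (ε : P.carrier →ₗ[A] M.carrier),
      IsProjectiveCover ε ∧ P.VanishesBelow (b + c) ∧ P.IsLocallyFinite := by
  obtain ⟨ι, δ, v, hv, hspan, hbδ, hδ⟩ := exists_homogeneous_generators hM hb
  have hfree : (free 𝒜 δ).IsLocallyFinite := isLocallyFinite_free hA hAfin hδ
  obtain ⟨S, hS, hε⟩ := exists_isProjectiveCover_comp_incl hfree (isDegreeZero_freeLift hv)
    (freeLift_surjective δ hspan)
  exact ⟨hS.toGModule, _, hε,
    (vanishesBelow_free hA hbδ).of_injective hS.isDegreeZero_incl hS.incl_injective,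
    hfree.of_injective hS.isDegreeZero_incl hS.incl_injective⟩

end Covers

section Resolutions

/-- Minimal graded projective resolutions `⋯ → P 1 → P 0 → M → 0`; minimality is the inclusion of
the kernel of each map in the graded radical of its source. -/
structure IsMinimalResolution {M : GModule A 𝒜} {P : ℕ → GModule A 𝒜}
    (d : ∀ k, (P (k + 1)).carrier →ₗ[A] (P k).carrier) (ε : (P 0).carrier →ₗ[A] M.carrier) :
    Prop where
  projective : ∀ k, Module.Projective A (P k).carrier
  isDegreeZero : ∀ k, IsDegreeZero (d k)
  isDegreeZero_augmentation : IsDegreeZero ε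
  surjective : Function.Surjective ε
  range_zero : LinearMap.range (d 0) = LinearMap.ker ε
  range_succ : ∀ k, LinearMap.range (d (k + 1)) = LinearMap.ker (d k)
  ker_augmentation_le : LinearMap.ker ε ≤ (P 0).gradedRad
  range_le : ∀ k, LinearMap.range (d k) ≤ (P k).gradedRad

/-- The class `Q k` contains the `k`-th syzygies of the resolution. -/
theorem exists_isMinimalResolution {Q : ℕ → GModule A 𝒜 → Prop}
    (hcover : ∀ k M, Q k M → ∃ (P : GModule A 𝒜) (ε : P.carrier →ₗ[A] M.carrier),
      IsProjectiveCover ε ∧ Q (k + 1) P)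
    (hsub : ∀ k (P : GModule A 𝒜) S (hS : P.IsGradedSub S), Q k P → Q k hS.toGModule)
    {M : GModule A 𝒜} (hM : Q 0 M) :
    ∃ (P : ℕ → GModule A 𝒜) (d : ∀ k, (P (k + 1)).carrier →ₗ[A] (P k).carrier)
      (ε : (P 0).carrier →ₗ[A] M.carrier), IsMinimalResolution d ε ∧ ∀ k, Q (k + 1) (P k) := by
  choose cover ε hε hQ using hcover
  have hker (k M) (h : Q k M) : (cover k M h).IsGradedSub (LinearMap.ker (ε k M h)) :=
    (hε k M h).isDegreeZero.isGradedSub_ker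
  let syzygy : ∀ k, {N // Q k N} := fun k => Nat.rec ⟨M, hM⟩ (fun k N =>
    ⟨(hker k N.1 N.2).toGModule, hsub _ _ _ (hker k N.1 N.2) (hQ k N.1 N.2)⟩) k
  let P (k : ℕ) : GModule A 𝒜 := cover k (syzygy k).1 (syzygy k).2
  let π (k : ℕ) : (P k).carrier →ₗ[A] (syzygy k).1.carrier := ε k (syzygy k).1 (syzygy k).2
  have hπ (k : ℕ) : IsProjectiveCover (π k) := hε k _ _
  let ι (k : ℕ) : (syzygy (k + 1)).1.carrier →ₗ[A] (P k).carrier := (hker k _ (syzygy k).2).incl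
  have hι (k : ℕ) : LinearMap.ker (ι k) = ⊥ :=
    LinearMap.ker_eq_bot.2 (hker k _ (syzygy k).2).incl_injective
  have hrange (k : ℕ) : LinearMap.range (ι k ∘ₗ π (k + 1)) = LinearMap.ker (π k) :=
    (LinearMap.range_comp_of_range_eq_top _
      (LinearMap.range_eq_top.2 (hπ (k + 1)).surjective)).trans (hker k _ (syzygy k).2).range_incl
  refine ⟨P, fun k => ι k ∘ₗ π (k + 1), π 0, ?_, fun k => hQ k _ _⟩
  exact {
    projective := fun k => (hπ k).projective
    isDegreeZero := fun k =>
      (hker k _ (syzygy k).2).isDegreeZero_incl.comp (hπ (k + 1)).isDegreeZero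
    isDegreeZero_augmentation := (hπ 0).isDegreeZero
    surjective := (hπ 0).surjective
    range_zero := hrange 0
    range_succ := fun k =>
      (hrange (k + 1)).trans (LinearMap.ker_comp_of_ker_eq_bot _ (hι k)).symm
    ker_augmentation_le := (hπ 0).ker_le_gradedRad
    range_le := fun k => (hrange k).le.trans (hπ k).ker_le_gradedRad }

end Resolutions

end GModule

/-- if `𝒜 i = 0` for `i < c` with finite-dimensional pieces, and `M`
is a graded module with `M^i = 0` for `i < b` and finite-dimensional pieces, then
`M` admits a minimal graded projective resolution `⋯ → P₁ → P₀ → M → 0` whose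
`k`-th term satisfies `P_k^i = 0` for `i < b + (k+1)·c` and has finite-dimensional
graded pieces. -/
theorem stmt2 (c : ℤ) (hA : ∀ i : ℤ, i < c → 𝒜 i = ⊥)
    (hAfin : ∀ i, FiniteDimensional ℂ (𝒜 i)) [GradedAlgebra 𝒜]
    (M : GModule A 𝒜) (b : ℤ) (hMb : ∀ i : ℤ, i < b → M.grading i = ⊥)
    (hMfin : ∀ i, FiniteDimensional ℂ (M.grading i)) :
    ∃ (P : ℕ → GModule A 𝒜)
      (d : ∀ k : ℕ, (P (k + 1)).carrier →ₗ[A] (P k).carrier)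
      (ε : (P 0).carrier →ₗ[A] M.carrier),
      -- each term is projective
      (∀ k, Module.Projective A (P k).carrier) ∧
      -- the maps are graded of degree zero
      (∀ k i, ∀ x ∈ (P (k + 1)).grading i, d k x ∈ (P k).grading i) ∧
      (∀ i, ∀ x ∈ (P 0).grading i, ε x ∈ M.grading i) ∧
      -- it is a resolution of `M`
      Function.Surjective ε ∧
      LinearMap.range (d 0) = LinearMap.ker ε ∧
      (∀ k, LinearMap.range (d (k + 1)) = LinearMap.ker (d k)) ∧
      -- minimality
      LinearMap.ker ε ≤ (P 0).gradedRad ∧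
      (∀ k, LinearMap.range (d k) ≤ (P k).gradedRad) ∧
      -- degree bound and local finiteness
      (∀ (k : ℕ) (i : ℤ), i < b + (k + 1) * c → (P k).grading i = ⊥) ∧
      (∀ k i, FiniteDimensional ℂ ((P k).grading i)) := by
  obtain ⟨P, d, ε, h, hP⟩ := GModule.exists_isMinimalResolution
    (Q := fun k N => N.VanishesBelow (b + k * c) ∧ N.IsLocallyFinite)
    (fun k N hN => by
      have hdeg : b + ((k + 1 : ℕ) : ℤ) * c = b + k * c + c := by push_cast; ring
      rw [hdeg]
      exact GModule.exists_isProjectiveCover hA hAfin hN.1 hN.2)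
    (fun k N S hS hN => ⟨hN.1.of_injective hS.isDegreeZero_incl hS.incl_injective,
      hN.2.of_injective hS.isDegreeZero_incl hS.incl_injective⟩)
    (M := M) ⟨by simpa [GModule.VanishesBelow] using hMb, hMfin⟩
  exact ⟨P, d, ε, h.projective, h.isDegreeZero, h.isDegreeZero_augmentation, h.surjective,
    h.range_zero, h.range_succ, h.ker_augmentation_le, h.range_le,
    fun k i hi => (hP k).1 i (by exact_mod_cast hi), fun k => (hP k).2⟩
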